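/- arXiv:2505.23222 — 2 statements merged into one kernel-verified Lean document; each statement's English description precedes it below -/
import Mathlib

section
/- Localized first variation identity for the diffuse surface measure: for every test function φ ∈ C¹_c(ℝ^d × (0,T)) and every t ∈ (0,T), σ d/dt ∫_{ℝ^d} φ(x,t) dμ_t^ε(x) = ∫_{ℝ^d} ( −ε φ (∂ₜφ̃)² + λ(t) φ √(2W(φ̃)) ∂ₜφ̃ − ε (∇φ · ∇φ̃) ∂ₜφ̃ ) dx + σ ∫_{ℝ^d} ∂ₜφ dμ_t^ε, where φ̃ denotes the solution of the equation and φ the test function. -/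
open MeasureTheory Real Function
open scoped RealInnerProductSpace

noncomputable section

abbrev Euc (d : ℕ) := EuclideanSpace ℝ (Fin d)

/-- The double-well potential `W(s) = (1-s²)²/2`. -/
def W (s : ℝ) : ℝ := (1 - s ^ 2) ^ 2 / 2

/-- Its derivative `W'(s) = -2s(1-s²)`. -/
def Wp (s : ℝ) : ℝ := -2 * s * (1 - s ^ 2)

/-- `k(s) = ∫₀ˢ √(2W(r)) dr`. -/
def kfun (s : ℝ) : ℝ := ∫ r in (0:ℝ)..s, Real.sqrt (2 * W r)

/-- The unit cell `Q = [0,1)^d`. -/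
def Qcell (d : ℕ) : Set (Euc d) := {x | ∀ i, x i ∈ Set.Ico (0:ℝ) 1}

/-- The Laplacian (sum of second partial derivatives). -/
def lap {d : ℕ} (f : Euc d → ℝ) (x : Euc d) : ℝ :=
  ∑ i : Fin d, fderiv ℝ (fun y => fderiv ℝ f y (EuclideanSpace.single i 1)) x
    (EuclideanSpace.single i 1)

/-- `σ = ∫₋₁¹ √(2W(s)) ds`. -/
def sigma0 : ℝ := ∫ s in (-1:ℝ)..1, Real.sqrt (2 * W s)

/-- Density of the diffuse surface measure `μ_t^ε` with respect to Lebesgue measure. -/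
def muDens (d : ℕ) (ε : ℝ) (φt : Euc d → ℝ → ℝ) (x : Euc d) (t : ℝ) : ℝ :=
  (1 / sigma0) * (ε * ‖gradient (fun y => φt y t) x‖ ^ 2 / 2 + W (φt x t) / ε)

/-!
Differentiating under the integral sign, the time derivative of `∫ ζ e(u)`, where
`e(u) = κ |∇u|² / 2 + V(u)`, is `∫ ∂ₜζ e(u) + ∫ ζ (κ ∇u · ∇∂ₜu + V'(u) ∂ₜu)`. Green's identity,
tested against the compactly supported function `ζ ∂ₜu`, turns the second integral into
`∫ ζ (V'(u) - κ Δu) ∂ₜu - κ ∫ (∇ζ · ∇u) ∂ₜu`, and the equation for `u` replaces `V'(u) - κ Δu`.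
This is applied with `κ = ε` and `V = W / ε`.
-/

section ParametricIntegral

variable {X F : Type*} [TopologicalSpace X]

theorem hasCompactSupport_slice [R1Space X] {Y : Type*} [TopologicalSpace Y] [Zero F]
    {f : X → Y → F} (hc : HasCompactSupport (uncurry f)) (y : Y) : HasCompactSupport (f · y) :=
  HasCompactSupport.intro (hc.isCompact.image continuous_fst) fun x hx ↦
    image_eq_zero_of_notMem_tsupport (f := uncurry f) fun h ↦ hx ⟨(x, y), h, rfl⟩

variable [NormedAddCommGroup F] [NormedSpace ℝ F] {f : X → ℝ → F}

theorem hasCompactSupport_uncurry_deriv [R1Space X] (hc : HasCompactSupport (uncurry f)) :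
    HasCompactSupport (uncurry fun x ↦ deriv (f x)) := by
  refine HasCompactSupport.intro hc.isCompact fun ⟨x, t⟩ hxt ↦ ?_
  have near : f x =ᶠ[nhds t] fun _ ↦ 0 :=
    (Continuous.prodMk_right x).continuousAt.eventually
      (notMem_tsupport_iff_eventuallyEq.mp hxt)
  simpa using near.deriv_eq

theorem hasDerivAt_integral_of_hasCompactSupport [T2Space X] [MeasurableSpace X]
    [OpensMeasurableSpace X] {μ : Measure X} [IsFiniteMeasureOnCompacts μ]
    (hf : Continuous (uncurry f)) (hfd : ∀ x, Differentiable ℝ (f x))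
    (hf' : Continuous (uncurry fun x ↦ deriv (f x))) (hc : HasCompactSupport (uncurry f)) (t : ℝ) :
    HasDerivAt (fun s ↦ ∫ x, f x s ∂μ) (∫ x, deriv (f x) t ∂μ) t := by
  have hc' := hasCompactSupport_uncurry_deriv hc
  have integrable_slice {g : X → ℝ → F} (hg : Continuous (uncurry g))
      (hgc : HasCompactSupport (uncurry g)) (s : ℝ) : Integrable (g · s) μ :=
    (hg.comp (.prodMk_left s)).integrable_of_hasCompactSupport (hasCompactSupport_slice hgc s)
  obtain ⟨C, hC⟩ := hf'.bounded_above_of_compact_support hc'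
  set K : Set X := Prod.fst '' tsupport (uncurry fun x ↦ deriv (f x))
  have hK : IsCompact K := hc'.isCompact.image continuous_fst
  have deriv_le (x : X) (s : ℝ) : ‖deriv (f x) s‖ ≤ K.indicator (fun _ ↦ C) x := by
    by_cases hx : x ∈ K
    · simpa only [Set.indicator_of_mem hx, uncurry_apply_pair] using hC (x, s)
    · have : uncurry (fun x ↦ deriv (f x)) (x, s) = 0 :=
        image_eq_zero_of_notMem_tsupport fun h ↦ hx ⟨(x, s), h, rfl⟩
      simpa only [Set.indicator_of_notMem hx, norm_le_zero_iff, uncurry_apply_pair] using this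
  exact (hasDerivAt_integral_of_dominated_loc_of_deriv_le Filter.univ_mem
    (.of_forall fun s ↦ (integrable_slice hf hc s).aestronglyMeasurable) (integrable_slice hf hc t)
    (integrable_slice hf' hc' t).aestronglyMeasurable (.of_forall fun x s _ ↦ deriv_le x s)
    ((integrable_indicator_iff hK.measurableSet).mpr (integrableOn_const hK.measure_lt_top.ne))
    (.of_forall fun x s _ ↦ (hfd x s).hasDerivAt)).2

end ParametricIntegral

section MixedDerivatives

variable {E F : Type*} [NormedAddCommGroup E] [NormedSpace ℝ E] [NormedAddCommGroup F]
  [NormedSpace ℝ F] {f : E → ℝ → F} {m n : WithTop ℕ∞}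

theorem contDiff_uncurry_deriv (hf : ContDiff ℝ m (uncurry f)) (hnm : n + 1 ≤ m) :
    ContDiff ℝ n (uncurry fun x ↦ deriv (f x)) :=
  ContDiff.fderiv_apply (f := fun p : E × ℝ ↦ f p.1) (hf.comp (by fun_prop :
    ContDiff ℝ m fun q : (E × ℝ) × ℝ ↦ (q.1.1, q.2))) contDiff_snd contDiff_const hnm

theorem hasDerivAt_fderiv_slice (hf : ContDiff ℝ 2 (uncurry f)) (x : E) (t : ℝ) :
    HasDerivAt (fun s ↦ fderiv ℝ (f · s) x) (fderiv ℝ (fun y ↦ deriv (f y) t) x) t := by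
  set D : E × ℝ → E × ℝ →L[ℝ] F := fderiv ℝ (uncurry f)
  have hfd : Differentiable ℝ (uncurry f) := hf.differentiable two_ne_zero
  have hD : HasFDerivAt D (fderiv ℝ D (x, t)) (x, t) :=
    ((hf.fderiv_right (m := 1) le_rfl).differentiable one_ne_zero _).hasFDerivAt
  have fderiv_slice (s : ℝ) : fderiv ℝ (f · s) x = (D (x, s)).comp (.inl ℝ E ℝ) := by
    have := (hfd (x, s)).hasFDerivAt.comp x (hasFDerivAt_prodMk_left (𝕜 := ℝ) x s)
    exact this.fderiv
  have deriv_slice (y : E) : deriv (f y) t = D (y, t) (0, 1) := by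
    simpa using! ((hfd (y, t)).hasFDerivAt.comp t (hasFDerivAt_prodMk_right y t)).hasDerivAt.deriv
  have deriv_fderiv : HasDerivAt (fun s ↦ (D (x, s)).comp (.inl ℝ E ℝ))
      ((fderiv ℝ D (x, t) (0, 1)).comp (.inl ℝ E ℝ)) t := by
    have := (hD.comp t (hasFDerivAt_prodMk_right x t)).hasDerivAt
    simpa using! this.clm_comp (hasDerivAt_const t (ContinuousLinearMap.inl ℝ E ℝ))
  have fderiv_deriv : fderiv ℝ (fun y ↦ D (y, t) (0, 1)) x =
      ((fderiv ℝ D (x, t)).comp (.inl ℝ E ℝ)).flip (0, 1) := by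
    have := hD.comp x (hasFDerivAt_prodMk_left (𝕜 := ℝ) x t)
    simpa using! (this.clm_apply (hasFDerivAt_const ((0, 1) : E × ℝ) x)).fderiv
  simp only [fderiv_slice, deriv_slice, fderiv_deriv]
  refine deriv_fderiv.congr_deriv ?_
  ext v
  exact second_derivative_symmetric (fun p ↦ (hfd p).hasFDerivAt) hD _ _

end MixedDerivatives

section Gradient

open scoped Gradient

variable {E G : Type*} [NormedAddCommGroup E] [InnerProductSpace ℝ E] [CompleteSpace E]
  [NormedAddCommGroup G] [NormedSpace ℝ G] {m n : WithTop ℕ∞}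

theorem gradient_fun_mul {f g : E → ℝ} {x : E} (hf : DifferentiableAt ℝ f x)
    (hg : DifferentiableAt ℝ g x) :
    ∇ (fun y ↦ f y * g y) x = f x • ∇ g x + g x • ∇ f x := by
  refine ext_inner_right ℝ fun v ↦ ?_
  simp [inner_add_left, inner_smul_left, inner_gradient_left, fderiv_fun_mul hf hg]

theorem hasCompactSupport_inner_gradient {f : E → ℝ} (hf : HasCompactSupport f) (g : E → E) :
    HasCompactSupport fun x ↦ ⟪∇ f x, g x⟫ := by
  refine (hf.fderiv ℝ).mono fun x hx hfx ↦ hx ?_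
  simp only [inner_gradient_left, hfx, zero_apply]

theorem contDiff_gradient_apply {f : G → E → ℝ} {g : G → E} (hf : ContDiff ℝ m (uncurry f))
    (hg : ContDiff ℝ n g) (hnm : n + 1 ≤ m) : ContDiff ℝ n fun p ↦ ∇ (f p) (g p) :=
  ((InnerProductSpace.toDual ℝ E).symm : StrongDual ℝ E ≃ₗᵢ[ℝ] E).contDiff.comp
    (hf.fderiv hg hnm)

theorem continuous_gradient {f : E → ℝ} (hf : ContDiff ℝ 1 f) : Continuous (∇ f) :=
  (contDiff_gradient_apply (f := fun _ : E ↦ f) (n := 0) (hf.comp contDiff_snd) contDiff_id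
    (by simp)).continuous

theorem hasDerivAt_gradient_slice {f : E → ℝ → ℝ} (hf : ContDiff ℝ 2 (uncurry f)) (x : E) (t : ℝ) :
    HasDerivAt (fun s ↦ ∇ (f · s) x) (∇ (fun y ↦ deriv (f y) t) x) t :=
  ((InnerProductSpace.toDual ℝ E).symm : StrongDual ℝ E ≃ₗᵢ[ℝ] E).toContinuousLinearEquiv
    |>.hasFDerivAt.comp_hasDerivAt t (hasDerivAt_fderiv_slice hf x t)

end Gradient

section Green

open scoped Gradient Laplacian

variable {E : Type*} [NormedAddCommGroup E] [InnerProductSpace ℝ E] [FiniteDimensional ℝ E]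

theorem laplacian_eq_sum_fderiv_fderiv {F ι : Type*} [NormedAddCommGroup F] [NormedSpace ℝ F]
    [Fintype ι] (b : OrthonormalBasis ι ℝ E) {f : E → F} {x : E} (hf : ContDiffAt ℝ 2 f x) :
    Δ f x = ∑ i, fderiv ℝ (fun y ↦ fderiv ℝ f y (b i)) x (b i) := by
  have hf' : DifferentiableAt ℝ (fderiv ℝ f) x :=
    (hf.fderiv_right (m := 1) le_rfl).differentiableAt one_ne_zero
  simp [InnerProductSpace.laplacian_eq_iteratedFDeriv_orthonormalBasis f b,
    iteratedFDeriv_two_apply, fderiv_clm_apply hf' (differentiableAt_const _)]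

theorem continuous_laplacian {F : Type*} [NormedAddCommGroup F] [NormedSpace ℝ F] {f : E → F}
    (hf : ContDiff ℝ 2 f) : Continuous (Δ f) := by
  rw [InnerProductSpace.laplacian_eq_iteratedFDeriv_stdOrthonormalBasis]
  have := hf.continuous_iteratedFDeriv (m := 2) le_rfl
  fun_prop

theorem inner_gradient_gradient_eq_sum {ι : Type*} [Fintype ι] (b : OrthonormalBasis ι ℝ E)
    (f g : E → ℝ) (x : E) : ⟪∇ f x, ∇ g x⟫ = ∑ i, fderiv ℝ f x (b i) * fderiv ℝ g x (b i) := by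
  simp only [← b.sum_inner_mul_inner (∇ f x) (∇ g x), real_inner_comm (∇ g x) (b _),
    inner_gradient_left]

variable [MeasurableSpace E] [BorelSpace E] {μ : Measure E} [μ.IsAddHaarMeasure]

theorem integral_inner_gradient_eq_neg_integral_mul_laplacian {η f : E → ℝ} (hη : ContDiff ℝ 1 η)
    (hηc : HasCompactSupport η) (hf : ContDiff ℝ 2 f) :
    ∫ x, ⟪∇ η x, ∇ f x⟫ ∂μ = -∫ x, η x * Δ f x ∂μ := by
  set b := stdOrthonormalBasis ℝ E
  have hfd (i) : ContDiff ℝ 1 fun y ↦ fderiv ℝ f y (b i) :=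
    (hf.fderiv_right le_rfl).clm_apply contDiff_const
  have hη' (i) : Continuous fun x ↦ fderiv ℝ η x (b i) :=
    (hη.continuous_fderiv one_ne_zero).clm_apply continuous_const
  have hf' (i) : Continuous fun x ↦ fderiv ℝ (fun y ↦ fderiv ℝ f y (b i)) x (b i) :=
    ((hfd i).continuous_fderiv one_ne_zero).clm_apply continuous_const
  have int_first (i) : Integrable (fun x ↦ fderiv ℝ η x (b i) * fderiv ℝ f x (b i)) μ :=
    ((hη' i).mul (hfd i).continuous).integrable_of_hasCompactSupport
      (hηc.fderiv_apply ℝ (b i)).mul_right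
  have int_second (i) :
      Integrable (fun x ↦ η x * fderiv ℝ (fun y ↦ fderiv ℝ f y (b i)) x (b i)) μ :=
    (hη.continuous.mul (hf' i)).integrable_of_hasCompactSupport hηc.mul_right
  have by_parts (i) : ∫ x, fderiv ℝ η x (b i) * fderiv ℝ f x (b i) ∂μ =
      -∫ x, η x * fderiv ℝ (fun y ↦ fderiv ℝ f y (b i)) x (b i) ∂μ := by
    rw [integral_mul_fderiv_eq_neg_fderiv_mul_of_integrable (int_first i) (int_second i)
      ((hη.continuous.mul (hfd i).continuous).integrable_of_hasCompactSupport hηc.mul_right)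
      (fun x _ ↦ hη.differentiable one_ne_zero x) (fun x _ ↦ (hfd i).differentiable one_ne_zero x),
      neg_neg]
  calc ∫ x, ⟪∇ η x, ∇ f x⟫ ∂μ
      = ∑ i, ∫ x, fderiv ℝ η x (b i) * fderiv ℝ f x (b i) ∂μ := by
        simp only [inner_gradient_gradient_eq_sum b, integral_finsetSum _ fun i _ ↦ int_first i]
    _ = -∑ i, ∫ x, η x * fderiv ℝ (fun y ↦ fderiv ℝ f y (b i)) x (b i) ∂μ := by
        simp only [by_parts, Finset.sum_neg_distrib]
    _ = -∫ x, η x * Δ f x ∂μ := by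
        simp only [laplacian_eq_sum_fderiv_fderiv b hf.contDiffAt, Finset.mul_sum,
          integral_finsetSum _ fun i _ ↦ int_second i]

end Green

section Energy

open scoped Gradient Laplacian

variable {E : Type*} [NormedAddCommGroup E] [InnerProductSpace ℝ E] {κ : ℝ} {V : ℝ → ℝ}

/-- The gradient energy density `κ |∇f|² / 2 + V(f)` of a phase field `f`. The diffuse surface
energy `ε |∇f|² / 2 + W(f) / ε` is the case `κ = ε`, `V = W / ε`. -/
def energyDensity [CompleteSpace E] (κ : ℝ) (V : ℝ → ℝ) (f : E → ℝ) (x : E) : ℝ :=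
  κ * ‖∇ f x‖ ^ 2 / 2 + V (f x)

theorem contDiff_uncurry_energyDensity [CompleteSpace E] {u : E → ℝ → ℝ} (hV : ContDiff ℝ 1 V)
    (hu : ContDiff ℝ 2 (uncurry u)) :
    ContDiff ℝ 1 (uncurry fun x t ↦ energyDensity κ V (u · t) x) := by
  have hgrad : ContDiff ℝ 1 fun p : E × ℝ ↦ ∇ (u · p.2) p.1 :=
    contDiff_gradient_apply (f := fun (p : E × ℝ) y ↦ u y p.2)
      (hu.comp (by fun_prop : ContDiff ℝ 2 fun q : (E × ℝ) × E ↦ (q.2, q.1.2))) contDiff_fst le_rfl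
  exact ((contDiff_const.mul (hgrad.norm_sq ℝ)).div_const 2).add
    (hV.comp (hu.of_le one_le_two))

theorem hasDerivAt_energyDensity [CompleteSpace E] {u : E → ℝ → ℝ} (hV : ContDiff ℝ 1 V)
    (hu : ContDiff ℝ 2 (uncurry u)) (x : E) (t : ℝ) :
    HasDerivAt (fun s ↦ energyDensity κ V (u · s) x)
      (κ * ⟪∇ (u · t) x, ∇ (fun y ↦ deriv (u y) t) x⟫ + deriv V (u x t) * deriv (u x) t) t := by
  have hgrad := ((hasDerivAt_gradient_slice hu x t).norm_sq.const_mul κ).div_const 2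
  have hux : HasDerivAt (u x) (deriv (u x) t) t :=
    ((hu.comp (contDiff_prodMk_right x)).differentiable two_ne_zero t).hasDerivAt
  have hpot := ((hV.differentiable one_ne_zero (u x t)).hasDerivAt).comp t hux
  exact (hgrad.add hpot).congr_deriv (by ring)

variable [FiniteDimensional ℝ E] [MeasurableSpace E] [BorelSpace E] {μ : Measure E}
  [μ.IsAddHaarMeasure]

theorem integrable_mul_energyDensity_variation {f v z : E → ℝ} (hV : ContDiff ℝ 1 V)
    (hf : ContDiff ℝ 1 f) (hv : ContDiff ℝ 1 v) (hz : Continuous z) (hzc : HasCompactSupport z) :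
    Integrable (fun x ↦ z x * (κ * ⟪∇ f x, ∇ v x⟫ + deriv V (f x) * v x)) μ := by
  have cont_grad_f : Continuous (∇ f) := continuous_gradient hf
  have cont_grad_v : Continuous (∇ v) := continuous_gradient hv
  have cont_f : Continuous f := hf.continuous
  have cont_v : Continuous v := hv.continuous
  exact Continuous.integrable_of_hasCompactSupport (by fun_prop) hzc.mul_right

theorem integral_mul_energyDensity_variation {f v z : E → ℝ} (hV : ContDiff ℝ 1 V)
    (hf : ContDiff ℝ 2 f) (hv : ContDiff ℝ 1 v) (hz : ContDiff ℝ 1 z) (hzc : HasCompactSupport z) :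
    ∫ x, z x * (κ * ⟪∇ f x, ∇ v x⟫ + deriv V (f x) * v x) ∂μ =
      ∫ x, (z x * (deriv V (f x) - κ * Δ f x) * v x - κ * ⟪∇ z x, ∇ f x⟫ * v x) ∂μ := by
  have hzv : HasCompactSupport fun x ↦ z x * v x := hzc.mul_right
  have cont_f : Continuous f := hf.continuous
  have cont_v : Continuous v := hv.continuous
  have cont_z : Continuous z := hz.continuous
  have cont_grad_f : Continuous (∇ f) := continuous_gradient (hf.of_le one_le_two)
  have cont_grad_z : Continuous (∇ z) := continuous_gradient hz
  have cont_grad_zv : Continuous (∇ fun x ↦ z x * v x) := continuous_gradient (hz.mul hv)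
  have cont_lap : Continuous (Δ f) := continuous_laplacian hf
  have product_rule (x : E) : ⟪∇ (fun x ↦ z x * v x) x, ∇ f x⟫ =
      z x * ⟪∇ f x, ∇ v x⟫ + v x * ⟪∇ z x, ∇ f x⟫ := by
    rw [gradient_fun_mul (hz.differentiable one_ne_zero x) (hv.differentiable one_ne_zero x),
      inner_add_left, real_inner_smul_left, real_inner_smul_left, real_inner_comm]
  rw [← sub_eq_zero, ← integral_sub]
  · calc _ = κ * ∫ x, (⟪∇ (fun x ↦ z x * v x) x, ∇ f x⟫ + z x * v x * Δ f x) ∂μ := by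
          rw [← integral_const_mul]
          congr with x
          rw [product_rule]
          ring
      _ = 0 := by
          rw [integral_add,
            integral_inner_gradient_eq_neg_integral_mul_laplacian (hz.mul hv) hzv hf,
            neg_add_cancel, mul_zero]
          · exact (cont_grad_zv.inner cont_grad_f).integrable_of_hasCompactSupport
              (hasCompactSupport_inner_gradient hzv _)
          · exact ((cont_z.mul cont_v).mul cont_lap).integrable_of_hasCompactSupport hzv.mul_right
  · exact integrable_mul_energyDensity_variation hV (hf.of_le one_le_two) hv cont_z hzc
  · exact Continuous.integrable_of_hasCompactSupport (by fun_prop)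
      (hzc.mul_right.mul_right.sub (hasCompactSupport_inner_gradient hzc _).mul_left.mul_right)

theorem hasDerivAt_integral_mul_energyDensity {u ζ : E → ℝ → ℝ} (hV : ContDiff ℝ 1 V)
    (hu : ContDiff ℝ 2 (uncurry u)) (hζ : ContDiff ℝ 1 (uncurry ζ))
    (hζc : HasCompactSupport (uncurry ζ)) (t : ℝ) :
    HasDerivAt (fun s ↦ ∫ x, ζ x s * energyDensity κ V (u · s) x ∂μ)
      ((∫ x, (ζ x t * (deriv V (u x t) - κ * Δ (u · t) x) * deriv (u x) t
          - κ * ⟪∇ (ζ · t) x, ∇ (u · t) x⟫ * deriv (u x) t) ∂μ)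
        + ∫ x, deriv (ζ x) t * energyDensity κ V (u · t) x ∂μ) t := by
  set e : E → ℝ → ℝ := fun x s ↦ energyDensity κ V (u · s) x
  have he : ContDiff ℝ 1 (uncurry e) := contDiff_uncurry_energyDensity hV hu
  have hζe : ContDiff ℝ 1 (uncurry fun x s ↦ ζ x s * e x s) := hζ.mul he
  have hut : ContDiff ℝ 2 (u · t) := hu.comp (contDiff_prodMk_left t)
  have hvt : ContDiff ℝ 1 fun x ↦ deriv (u x) t :=
    (contDiff_uncurry_deriv hu le_rfl).comp (contDiff_prodMk_left t)
  have hζt : ContDiff ℝ 1 (ζ · t) := hζ.comp (contDiff_prodMk_left t)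
  have differentiable_slice {f : E → ℝ → ℝ} (hf : ContDiff ℝ 1 (uncurry f)) (x : E) :
      Differentiable ℝ (f x) :=
    (hf.comp (contDiff_prodMk_right x)).differentiable one_ne_zero
  have continuous_deriv {f : E → ℝ → ℝ} (hf : ContDiff ℝ 1 (uncurry f)) :
      Continuous (uncurry fun x ↦ deriv (f x)) :=
    (contDiff_uncurry_deriv (n := 0) hf (by simp)).continuous
  have product_rule (x : E) : deriv (fun s ↦ ζ x s * e x s) t = deriv (ζ x) t * e x t + ζ x t *
      (κ * ⟪∇ (u · t) x, ∇ (fun y ↦ deriv (u y) t) x⟫ + deriv V (u x t) * deriv (u x) t) :=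
    ((differentiable_slice hζ x t).hasDerivAt.mul (hasDerivAt_energyDensity hV hu x t)).deriv
  refine (hasDerivAt_integral_of_hasCompactSupport hζe.continuous (differentiable_slice hζe)
    (continuous_deriv hζe) hζc.mul_right t).congr_deriv ?_
  simp only [product_rule]
  rw [← integral_mul_energyDensity_variation hV hut hvt hζt (hasCompactSupport_slice hζc t),
    integral_add, add_comm]
  · exact (((continuous_deriv hζ).mul he.continuous).comp
      (.prodMk_left t)).integrable_of_hasCompactSupport
      (hasCompactSupport_slice (hasCompactSupport_uncurry_deriv hζc) t).mul_right
  · exact integrable_mul_energyDensity_variation hV (hut.of_le one_le_two) hvt hζt.continuous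
      (hasCompactSupport_slice hζc t)

theorem stmt2_general {τ t : ℝ} {u ζ : E → ℝ → ℝ} {g : E → ℝ} (hV : ContDiff ℝ 1 V)
    (hu : ContDiff ℝ 2 (uncurry u)) (hζ : ContDiff ℝ 1 (uncurry ζ))
    (hζc : HasCompactSupport (uncurry ζ))
    (hPDE : ∀ x, τ * deriv (u x) t = κ * Δ (u · t) x - deriv V (u x t) + g x) :
    HasDerivAt (fun s ↦ ∫ x, ζ x s * energyDensity κ V (u · s) x ∂μ)
      ((∫ x, (-(τ * ζ x t * deriv (u x) t ^ 2) + g x * ζ x t * deriv (u x) t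
          - κ * ⟪∇ (ζ · t) x, ∇ (u · t) x⟫ * deriv (u x) t) ∂μ)
        + ∫ x, deriv (ζ x) t * energyDensity κ V (u · t) x ∂μ) t := by
  refine (hasDerivAt_integral_mul_energyDensity (κ := κ) (μ := μ) hV hu hζ hζc t).congr_deriv ?_
  congr with x
  linear_combination ζ x t * deriv (u x) t * hPDE x

end Energy

section DoubleWell

theorem contDiff_W {n : WithTop ℕ∞} : ContDiff ℝ n W := by
  unfold W
  fun_prop

theorem deriv_W : deriv W = Wp := by
  ext s
  have h := ((((hasDerivAt_id s).pow 2).const_sub 1).pow 2).div_const 2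
  refine (h.congr_deriv ?_).deriv
  simp only [Wp, Pi.pow_apply, id]
  ring

theorem sigma0_pos : 0 < sigma0 := by
  refine intervalIntegral.intervalIntegral_pos_of_pos_on
    (Continuous.intervalIntegrable ?_ _ _) (fun s hs ↦ ?_) (by norm_num)
  · exact (continuous_const.mul (contDiff_W (n := 0)).continuous).sqrt
  · have : 0 < 1 - s ^ 2 := by nlinarith [hs.1, hs.2]
    unfold W
    positivity

theorem sigma0_mul_integral_mul_muDens {d : ℕ} (ε : ℝ) (u : Euc d → ℝ → ℝ) (g : Euc d → ℝ) (t : ℝ) :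
    sigma0 * ∫ x, g x * muDens d ε u x t =
      ∫ x, g x * energyDensity ε (fun s ↦ W s / ε) (u · t) x := by
  rw [← integral_const_mul]
  congr with x
  rw [muDens, energyDensity]
  field_simp [sigma0_pos.ne']

theorem lap_eq_laplacian {d : ℕ} {f : Euc d → ℝ} (hf : ContDiff ℝ 2 f) :
    lap f = Laplacian.laplacian f := by
  ext x
  simp only [lap, laplacian_eq_sum_fderiv_fderiv (EuclideanSpace.basisFun (Fin d) ℝ) hf.contDiffAt,
    EuclideanSpace.basisFun_apply]

end DoubleWell

/-- localized first variation identity for the diffuse surface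
measure: for every `C¹` test function `ζ` compactly supported in `ℝ^d × (0,T)` and
every `t ∈ (0,T)`,
`σ (d/dt) ∫ ζ dμ_t^ε = ∫ (-ε ζ (∂ₜφ̃)² + λ ζ √(2W(φ̃)) ∂ₜφ̃ - ε ∇ζ·∇φ̃ ∂ₜφ̃) dx + σ ∫ ∂ₜζ dμ_t^ε`. -/
theorem stmt2 (d : ℕ) (hd : 2 ≤ d) (T ε α : ℝ) (hT : 0 < T) (hε : 0 < ε)
    (hα : α ∈ Set.Ioo (0:ℝ) 1)
    (φt : Euc d → ℝ → ℝ)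
    (hφt : ContDiff ℝ (⊤ : ℕ∞) (Function.uncurry φt))
    (hper : ∀ (x : Euc d) (z : Fin d → ℤ) (t : ℝ),
      φt (x + (WithLp.equiv 2 (Fin d → ℝ)).symm fun i => (z i : ℝ)) t = φt x t)
    (lam : ℝ → ℝ)
    (hlam : ∀ t, lam t = ε ^ (-α) *
      ((∫ x in Qcell d, kfun (φt x 0)) - (∫ x in Qcell d, kfun (φt x t))))
    (hPDE : ∀ (x : Euc d), ∀ t ∈ Set.Ioo (0:ℝ) T,
      ε * deriv (φt x) t =
        ε * lap (fun y => φt y t) x - Wp (φt x t) / ε + lam t * Real.sqrt (2 * W (φt x t)))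
    (ζ : Euc d → ℝ → ℝ)
    (hζ : ContDiff ℝ 1 (Function.uncurry ζ))
    (hζc : HasCompactSupport (Function.uncurry ζ))
    (hζsupp : tsupport (Function.uncurry ζ) ⊆ Set.univ ×ˢ Set.Ioo (0:ℝ) T) :
    ∀ t ∈ Set.Ioo (0:ℝ) T,
      HasDerivAt (fun s => sigma0 * ∫ x, ζ x s * muDens d ε φt x s)
        ((∫ x, (-(ε * ζ x t * (deriv (φt x) t) ^ 2)
            + lam t * ζ x t * Real.sqrt (2 * W (φt x t)) * deriv (φt x) t
            - ε * ⟪gradient (fun y => ζ y t) x, gradient (fun y => φt y t) x⟫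
                * deriv (φt x) t))
          + sigma0 * ∫ x, deriv (ζ x) t * muDens d ε φt x t) t := by
  intro t ht
  have hu : ContDiff ℝ 2 (uncurry φt) := hφt.of_le (WithTop.coe_le_coe.mpr (le_top : (2 : ℕ∞) ≤ ⊤))
  have hlap := lap_eq_laplacian (f := (φt · t)) (hu.comp (contDiff_prodMk_left t))
  simpa only [sigma0_mul_integral_mul_muDens, mul_right_comm (lam t)] using
    stmt2_general (μ := volume) (g := fun x ↦ lam t * √(2 * W (φt x t))) (contDiff_W.div_const ε)
      hu hζ hζc fun x ↦ by
        rw [deriv_div_const, deriv_W, ← hlap]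
        exact hPDE x t ht
end
end

section
/- L² bound for the approximate velocity: define v^ε(x,t) = −(∂ₜφ(x,t)/|∇φ(x,t)|²) ∇φ(x,t) at points where ∇φ(x,t) ≠ 0, and v^ε(x,t) = 0 otherwise. Then ∫₀ᵀ ∫_Q |v^ε(x,t)|² ε |∇φ(x,t)|² dx dt ≤ E^ε(0). -/
open MeasureTheory Real Function
open scoped RealInnerProductSpace

noncomputable section

/-- The total energy `E^ε(t) = E_S^ε(t) + E_P^ε(t)`. -/
def Eeps (d : ℕ) (ε α : ℝ) (φ : Euc d → ℝ → ℝ) (lam : ℝ → ℝ) (t : ℝ) : ℝ :=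
  (∫ x in Qcell d, (ε * ‖gradient (fun y => φ y t) x‖ ^ 2 / 2 + W (φ x t) / ε)) +
    ε ^ α / 2 * lam t ^ 2

open Classical in
/-- The approximate velocity vector `v^ε`. -/
def veps (d : ℕ) (φ : Euc d → ℝ → ℝ) (x : Euc d) (t : ℝ) : Euc d :=
  if gradient (fun y => φ y t) x ≠ 0 then
    (-(deriv (φ x) t) / ‖gradient (fun y => φ y t) x‖ ^ 2) • gradient (fun y => φ y t) x
  else 0

/-!
Pointwise, `|v^ε|² ε |∇φ|² ≤ ε (∂ₜφ)²`, so it suffices to bound `∫₀ᵀ ∫_Q ε (∂ₜφ)²`. The equation is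
the gradient flow of the energy: differentiating under the integral, integrating `⟨∇∂ₜφ, ∇φ⟩` by
parts over the periodic cell and using `ε^α λ λ' = -λ ∫_Q √(2W(φ)) ∂ₜφ` give
`d/dt E^ε = -∫_Q ∂ₜφ (ε Δφ - W'(φ)/ε + λ √(2W(φ))) = -∫_Q ε (∂ₜφ)²`.
Integrating in time and discarding `E^ε(T) ≥ 0` yields the bound.
-/

section BoundedSet

variable {X E : Type*} [MetricSpace X] [ProperSpace X] [MeasurableSpace X]
  [OpensMeasurableSpace X] [NormedAddCommGroup E] {μ : Measure X}
  [IsFiniteMeasureOnCompacts μ] {s : Set X}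

theorem integrableOn_of_continuous_of_isBounded (hs : Bornology.IsBounded s) {f : X → E}
    (hf : Continuous f) : IntegrableOn f s μ :=
  (hf.continuousOn.integrableOn_compact hs.isCompact_closure).mono_set subset_closure

variable [NormedSpace ℝ E]

theorem continuous_setIntegral_of_isBounded {Y : Type*} [TopologicalSpace Y]
    [FirstCountableTopology Y] [LocallyCompactSpace Y] (hs : Bornology.IsBounded s)
    {F : X → Y → E} (hF : Continuous (uncurry F)) :
    Continuous fun y => ∫ x in s, F x y ∂μ := by
  have restrict_closure : (μ.restrict s).restrict (closure s) = μ.restrict s := by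
    rw [Measure.restrict_restrict measurableSet_closure,
      Set.inter_eq_self_of_subset_right subset_closure]
  rw [← restrict_closure]
  exact continuous_parametric_integral_of_continuous (f := fun y x => F x y)
    (hF.comp continuous_swap) hs.isCompact_closure

theorem hasDerivAt_setIntegral_of_isBounded (hs : Bornology.IsBounded s) {F F' : X → ℝ → E}
    (hF : Continuous (uncurry F)) (hF' : Continuous (uncurry F'))
    (hderiv : ∀ x t, HasDerivAt (F x) (F' x t) t) (t : ℝ) :
    HasDerivAt (fun t => ∫ x in s, F x t ∂μ) (∫ x in s, F' x t ∂μ) t := by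
  obtain ⟨M, hM⟩ := (hs.isCompact_closure.prod (isCompact_closedBall t 1)).bddAbove_image
    hF'.norm.continuousOn
  have mem_closure : ∀ᵐ x ∂μ.restrict s, x ∈ closure s :=
    ae_restrict_of_ae_restrict_of_subset subset_closure (ae_restrict_mem measurableSet_closure)
  have integrable_slice {G : X → ℝ → E} (hG : Continuous (uncurry G)) (r : ℝ) :
      IntegrableOn (fun x => G x r) s μ :=
    integrableOn_of_continuous_of_isBounded hs (hG.comp (.prodMk_left r))
  refine (hasDerivAt_integral_of_dominated_loc_of_deriv_le (bound := fun _ => M)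
    (Metric.closedBall_mem_nhds t one_pos)
    (.of_forall fun r => (integrable_slice hF r).aestronglyMeasurable) (integrable_slice hF t)
    (integrable_slice hF' t).aestronglyMeasurable ?_
    (integrableOn_of_continuous_of_isBounded hs continuous_const)
    (.of_forall fun x r _ => hderiv x r)).2
  filter_upwards [mem_closure] with x hx r hr
  exact hM ⟨(x, r), ⟨hx, hr⟩, rfl⟩

end BoundedSet

section SpaceTime

variable {E G : Type*} [NormedAddCommGroup E] [NormedSpace ℝ E] [NormedAddCommGroup G]
  [NormedSpace ℝ G] {u : E → ℝ → G} {m n : WithTop ℕ∞}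

theorem contDiff_time_slice (hu : ContDiff ℝ n (uncurry u)) (t : ℝ) :
    ContDiff ℝ n fun x => u x t :=
  hu.comp (contDiff_prodMk_left t)

theorem fderiv_space_eq_comp_inl (hu : Differentiable ℝ (uncurry u)) (x : E) (t : ℝ) :
    fderiv ℝ (fun y => u y t) x = (fderiv ℝ (uncurry u) (x, t)).comp (.inl ℝ E ℝ) :=
  HasFDerivAt.fderiv <| (hu (x, t)).hasFDerivAt.comp (f := fun y => (y, t)) x
    (hasFDerivAt_prodMk_left x t)

theorem hasDerivAt_time (hu : Differentiable ℝ (uncurry u)) (x : E) (t : ℝ) :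
    HasDerivAt (u x) (deriv (u x) t) t :=
  ((hu (x, t)).comp t (f := fun s => (x, s)) (by fun_prop)).hasDerivAt

theorem deriv_time_eq_fderiv_apply (hu : Differentiable ℝ (uncurry u)) (x : E) (t : ℝ) :
    deriv (u x) t = fderiv ℝ (uncurry u) (x, t) (0, 1) :=
  ((hu (x, t)).hasFDerivAt.comp_hasDerivAt t
    ((hasDerivAt_const t x).prodMk (hasDerivAt_id t))).deriv

theorem contDiff_fderiv_space (hu : ContDiff ℝ n (uncurry u)) (hmn : m + 1 ≤ n) :
    ContDiff ℝ m (uncurry fun x t => fderiv ℝ (fun y => u y t) x) := by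
  have hdiff : Differentiable ℝ (uncurry u) := hu.differentiable (by aesop)
  simp only [uncurry_def, fderiv_space_eq_comp_inl hdiff]
  exact (hu.fderiv_right hmn).clm_comp contDiff_const

theorem contDiff_deriv_time (hu : ContDiff ℝ n (uncurry u)) (hmn : m + 1 ≤ n) :
    ContDiff ℝ m (uncurry fun x t => deriv (u x) t) := by
  have hdiff : Differentiable ℝ (uncurry u) := hu.differentiable (by aesop)
  simp only [uncurry_def, deriv_time_eq_fderiv_apply hdiff]
  exact (hu.fderiv_right hmn).clm_apply contDiff_const

theorem hasDerivAt_fderiv_space (hu : ContDiff ℝ 2 (uncurry u)) (x : E) (t : ℝ) :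
    HasDerivAt (fun s => fderiv ℝ (fun y => u y s) x)
      (fderiv ℝ (fun y => deriv (u y) t) x) t := by
  have hdiff : Differentiable ℝ (uncurry u) := hu.differentiable two_ne_zero
  have hdiff_fderiv : Differentiable ℝ (fderiv ℝ (uncurry u)) :=
    (hu.fderiv_right (m := 1) le_rfl).differentiable one_ne_zero
  have space_of_time : fderiv ℝ (fun y => deriv (u y) t) x =
      (fderiv ℝ (fderiv ℝ (uncurry u)) (x, t) (0, 1)).comp (.inl ℝ E ℝ) := by
    have symmetric : IsSymmSndFDerivAt ℝ (uncurry u) (x, t) :=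
      hu.contDiffAt.isSymmSndFDerivAt (by simp)
    have hasFDerivAt_deriv := ((hdiff_fderiv (x, t)).hasFDerivAt.comp (f := fun y => (y, t)) x
      (hasFDerivAt_prodMk_left x t)).clm_apply (hasFDerivAt_const (0, 1) x)
    simp only [deriv_time_eq_fderiv_apply hdiff]
    refine hasFDerivAt_deriv.fderiv.trans ?_
    ext v
    simp [symmetric.eq]
  rw [space_of_time]
  simp only [fderiv_space_eq_comp_inl hdiff]
  simpa using ((hdiff_fderiv (x, t)).hasFDerivAt.comp_hasDerivAt t
    ((hasDerivAt_const t x).prodMk (hasDerivAt_id t))).clm_comp (hasDerivAt_const _ _)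

theorem hasDerivAt_setIntegral_comp [ProperSpace E] [MeasurableSpace E] [OpensMeasurableSpace E]
    {μ : Measure E} [IsFiniteMeasureOnCompacts μ] {s : Set E} (hs : Bornology.IsBounded s)
    {f f' : ℝ → ℝ} (hf : ∀ r, HasDerivAt f (f' r) r) (hf' : Continuous f') {u : E → ℝ → ℝ}
    (hu : ContDiff ℝ 1 (uncurry u)) (t : ℝ) :
    HasDerivAt (fun t => ∫ x in s, f (u x t) ∂μ)
      (∫ x in s, f' (u x t) * deriv (u x) t ∂μ) t :=
  hasDerivAt_setIntegral_of_isBounded hs (F := fun x t => f (u x t))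
    (F' := fun x t => f' (u x t) * deriv (u x) t)
    ((continuous_iff_continuousAt.2 fun r => (hf r).continuousAt).comp hu.continuous)
    ((hf'.comp hu.continuous).fun_mul (contDiff_deriv_time (m := 0) hu (by simp)).continuous)
    (fun x r => (hf (u x r)).comp r (hasDerivAt_time (hu.differentiable one_ne_zero) x r)) t

end SpaceTime

section SpaceTimeGradient

variable {E : Type*} [NormedAddCommGroup E] [InnerProductSpace ℝ E] [CompleteSpace E]
  {u : E → ℝ → ℝ}

theorem hasDerivAt_gradient_space (hu : ContDiff ℝ 2 (uncurry u)) (x : E) (t : ℝ) :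
    HasDerivAt (fun s => gradient (fun y => u y s) x)
      (gradient (fun y => deriv (u y) t) x) t :=
  (InnerProductSpace.toDual ℝ E).symm.toContinuousLinearEquiv.hasFDerivAt.comp_hasDerivAt t
    (hasDerivAt_fderiv_space hu x t)

theorem contDiff_gradient {n m : WithTop ℕ∞} {f : E → ℝ} (hf : ContDiff ℝ n f) (hmn : m + 1 ≤ n) :
    ContDiff ℝ m (gradient f) :=
  (InnerProductSpace.toDual ℝ E).symm.toContinuousLinearEquiv.contDiff.comp (hf.fderiv_right hmn)

theorem continuous_gradient_space (hu : ContDiff ℝ 1 (uncurry u)) :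
    Continuous (uncurry fun x t => gradient (fun y => u y t) x) :=
  (InnerProductSpace.toDual ℝ E).symm.continuous.comp
    (contDiff_fderiv_space (m := 0) hu (by simp)).continuous

end SpaceTimeGradient

section UnitCell

variable {d : ℕ}

theorem isBounded_Qcell (d : ℕ) : Bornology.IsBounded (Qcell d) := by
  have hcompact : IsCompact (WithLp.toLp 2 '' Set.Icc (0 : Fin d → ℝ) 1) :=
    isCompact_Icc.image (PiLp.continuous_toLp 2 _)
  exact hcompact.isBounded.subset fun x hx =>
    ⟨WithLp.ofLp x, ⟨fun i => (hx i).1, fun i => (hx i).2.le⟩, rfl⟩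

theorem setIntegral_Qcell_eq_setIntegral_Icc {E : Type*} [NormedAddCommGroup E] [NormedSpace ℝ E]
    (f : Euc d → E) :
    ∫ x in Qcell d, f x = ∫ y in Set.Icc (0 : Fin d → ℝ) 1, f (WithLp.toLp 2 y) := by
  have preimage_eq_pi : (WithLp.toLp 2 ⁻¹' Qcell d : Set (Fin d → ℝ)) =
      Set.univ.pi fun i => Set.Ico ((0 : Fin d → ℝ) i) ((1 : Fin d → ℝ) i) := by
    ext y; simp [Qcell]
  rw [← (PiLp.volume_preserving_toLp (Fin d)).setIntegral_preimage_emb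
    (MeasurableEquiv.toLp 2 (Fin d → ℝ)).measurableEmbedding f (Qcell d), preimage_eq_pi]
  exact setIntegral_congr_set Measure.univ_pi_Ico_ae_eq_Icc

/-- `f` has period `1` in every coordinate direction, i.e. it descends to the torus `ℝᵈ / ℤᵈ`. -/
def IsCellPeriodic {β : Type*} (f : Euc d → β) : Prop :=
  ∀ i, Periodic f (EuclideanSpace.single i 1)

theorem isCellPeriodic_of_forall_int {β : Type*} {f : Euc d → β}
    (hf : ∀ (x : Euc d) (z : Fin d → ℤ),
      f (x + (WithLp.equiv 2 (Fin d → ℝ)).symm fun i => (z i : ℝ)) = f x) :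
    IsCellPeriodic f := by
  intro i x
  convert hf x (Pi.single i 1)
  ext j
  simp [Pi.single_apply]

theorem IsCellPeriodic.fderiv {E : Type*} [NormedAddCommGroup E] [NormedSpace ℝ E]
    {f : Euc d → E} (hf : IsCellPeriodic f) : IsCellPeriodic (fderiv ℝ f) := by
  intro i x
  rw [← fderiv_comp_add_right, (hf i).funext]

theorem setIntegral_Qcell_divergence_eq_zero {E : Type*} [NormedAddCommGroup E] [NormedSpace ℝ E]
    {V : Fin d → Euc d → E} (hV : ∀ i, ContDiff ℝ 1 (V i))
    (hper : ∀ i, Periodic (V i) (EuclideanSpace.single i 1)) :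
    ∫ x in Qcell d, ∑ i, fderiv ℝ (V i) x (EuclideanSpace.single i 1) = 0 := by
  obtain _ | n := d
  · simp
  let L : (Fin (n + 1) → ℝ) →L[ℝ] Euc (n + 1) :=
    (PiLp.continuousLinearEquiv 2 ℝ fun _ : Fin (n + 1) => ℝ).symm
  have L_single (i : Fin (n + 1)) : L (Pi.single i 1) = EuclideanSpace.single i 1 := rfl
  have front_eq_back (i : Fin (n + 1)) (y : Fin n → ℝ) :
      V i (L (i.insertNth 1 y)) = V i (L (i.insertNth 0 y)) := by
    rw [← hper i (L (i.insertNth 0 y)), ← L_single, ← map_add]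
    congr 2
    ext j
    refine Fin.succAboveCases i ?_ (fun k => ?_) j <;> simp
  have divergence := integral_divergence_of_hasFDerivAt_off_countable' (0 : Fin (n + 1) → ℝ) 1
    (fun _ => zero_le_one) (fun i y => V i (L y)) (fun i y => (fderiv ℝ (V i) (L y)).comp L)
    ∅ Set.countable_empty (fun i => ((hV i).continuous.comp L.continuous).continuousOn)
    (fun y _ i => ((hV i).differentiable one_ne_zero (L y)).hasFDerivAt.comp y L.hasFDerivAt)
    (Continuous.integrableOn_Icc <| continuous_finsetSum _ fun i _ =>
      (((hV i).continuous_fderiv one_ne_zero).comp L.continuous).clm_apply continuous_const)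
  rw [setIntegral_Qcell_eq_setIntegral_Icc]
  refine divergence.trans (Finset.sum_eq_zero fun i _ => ?_)
  simp only [Pi.one_apply, Pi.zero_apply, front_eq_back, sub_self]

theorem inner_gradient_eq_sum_fderiv (f g : Euc d → ℝ) (x : Euc d) :
    ⟪gradient f x, gradient g x⟫ = ∑ i, fderiv ℝ f x (EuclideanSpace.single i 1) *
      fderiv ℝ g x (EuclideanSpace.single i 1) := by
  rw [← (EuclideanSpace.basisFun (Fin d) ℝ).sum_inner_mul_inner]
  simp [inner_gradient_left, inner_gradient_right]

theorem contDiff_fderiv_single {f : Euc d → ℝ} (hf : ContDiff ℝ 2 f) (i : Fin d) :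
    ContDiff ℝ 1 fun x => fderiv ℝ f x (EuclideanSpace.single i 1) :=
  (hf.fderiv_right le_rfl).clm_apply contDiff_const

theorem continuous_lap {f : Euc d → ℝ} (hf : ContDiff ℝ 2 f) : Continuous (lap f) :=
  continuous_finsetSum _ fun i _ =>
    ((contDiff_fderiv_single hf i).continuous_fderiv one_ne_zero).clm_apply continuous_const

theorem divergence_mul_gradient {f g : Euc d → ℝ} (hf : Differentiable ℝ f)
    (hg : ContDiff ℝ 2 g) (x : Euc d) :
    ∑ i, fderiv ℝ (fun y => f y * fderiv ℝ g y (EuclideanSpace.single i 1)) x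
      (EuclideanSpace.single i 1) = ⟪gradient f x, gradient g x⟫ + f x * lap g x := by
  have product_rule (i : Fin d) : fderiv ℝ
      (fun y => f y * fderiv ℝ g y (EuclideanSpace.single i 1)) x (EuclideanSpace.single i 1) =
      fderiv ℝ f x (EuclideanSpace.single i 1) * fderiv ℝ g x (EuclideanSpace.single i 1) +
      f x * fderiv ℝ (fun y => fderiv ℝ g y (EuclideanSpace.single i 1)) x
        (EuclideanSpace.single i 1) := by
    rw [fderiv_fun_mul (hf x) ((contDiff_fderiv_single hg i).differentiable one_ne_zero x)]
    simp only [add_apply, smul_apply, smul_eq_mul]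
    ring
  simp only [product_rule, Finset.sum_add_distrib, inner_gradient_eq_sum_fderiv, lap,
    Finset.mul_sum]

theorem setIntegral_Qcell_inner_gradient {f g : Euc d → ℝ} (hf : ContDiff ℝ 1 f)
    (hg : ContDiff ℝ 2 g) (hf_per : IsCellPeriodic f) (hg_per : IsCellPeriodic g) :
    ∫ x in Qcell d, ⟪gradient f x, gradient g x⟫ = -∫ x in Qcell d, f x * lap g x := by
  have integral_divergence := setIntegral_Qcell_divergence_eq_zero
    (V := fun i x => f x * fderiv ℝ g x (EuclideanSpace.single i 1))
    (fun i => hf.mul (contDiff_fderiv_single hg i))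
    (fun i => (hf_per i).mul ((hg_per.fderiv i).comp fun D => D (EuclideanSpace.single i 1)))
  simp only [divergence_mul_gradient (hf.differentiable one_ne_zero) hg] at integral_divergence
  rw [integral_add] at integral_divergence
  · exact eq_neg_of_add_eq_zero_left integral_divergence
  · exact integrableOn_of_continuous_of_isBounded (isBounded_Qcell d)
      ((contDiff_gradient hf (m := 0) (by simp)).continuous.inner
        (contDiff_gradient hg (m := 1) le_rfl).continuous)
  · exact integrableOn_of_continuous_of_isBounded (isBounded_Qcell d)
      (hf.continuous.mul (continuous_lap hg))

end UnitCell

section DoubleWell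

theorem hasDerivAt_W (s : ℝ) : HasDerivAt W (Wp s) s := by
  refine ((((hasDerivAt_id s).pow 2).const_sub 1).pow 2 |>.div_const 2).congr_deriv ?_
  simp [Wp]
  ring

theorem continuous_W : Continuous W := by unfold W; fun_prop

theorem continuous_Wp : Continuous Wp := by unfold Wp; fun_prop

theorem W_nonneg (s : ℝ) : 0 ≤ W s := by unfold W; positivity

theorem continuous_sqrt_two_mul_W : Continuous fun s => √(2 * W s) :=
  (continuous_const.mul continuous_W).sqrt

theorem hasDerivAt_kfun (s : ℝ) : HasDerivAt kfun √(2 * W s) s :=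
  continuous_sqrt_two_mul_W.integral_hasStrictDerivAt 0 s |>.hasDerivAt

end DoubleWell

section Energy

variable {d : ℕ} {φ : Euc d → ℝ → ℝ} {lam : ℝ → ℝ} {ε α T : ℝ}

theorem hasDerivAt_setIntegral_Qcell_norm_gradient_sq (hφ : ContDiff ℝ 2 (uncurry φ))
    (hper : ∀ t, IsCellPeriodic fun x => φ x t) (t : ℝ) :
    HasDerivAt (fun t => ∫ x in Qcell d, ‖gradient (fun y => φ y t) x‖ ^ 2)
      (-(2 * ∫ x in Qcell d, deriv (φ x) t * lap (fun y => φ y t) x)) t := by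
  have hφ_time : ContDiff ℝ 1 (uncurry fun x t => deriv (φ x) t) := contDiff_deriv_time hφ le_rfl
  have continuous_gradient := continuous_gradient_space (hφ.of_le one_le_two)
  have hper_time : IsCellPeriodic fun x => deriv (φ x) t := fun i x =>
    congrArg (deriv · t) (funext fun s => hper s i x)
  have green := setIntegral_Qcell_inner_gradient (contDiff_time_slice hφ_time t)
    (contDiff_time_slice hφ t) hper_time (hper t)
  have hderiv (x : Euc d) (s : ℝ) : HasDerivAt (fun t => ‖gradient (fun y => φ y t) x‖ ^ 2)
      (2 * ⟪gradient (fun y => deriv (φ y) s) x, gradient (fun y => φ y s) x⟫) s := by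
    simpa only [real_inner_comm] using (hasDerivAt_gradient_space hφ x s).norm_sq
  refine (hasDerivAt_setIntegral_of_isBounded (isBounded_Qcell d)
    (F := fun x t => ‖gradient (fun y => φ y t) x‖ ^ 2)
    (F' := fun x t =>
      2 * ⟪gradient (fun y => deriv (φ y) t) x, gradient (fun y => φ y t) x⟫)
    (continuous_gradient.norm.fun_pow 2)
    (continuous_const.fun_mul ((continuous_gradient_space hφ_time).inner continuous_gradient))
    hderiv t).congr_deriv ?_
  rw [integral_const_mul, green, mul_neg]

theorem Eeps_eq_gradient_add_potential_add_penalty (hφ : ContDiff ℝ 1 (uncurry φ)) (t : ℝ) :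
    Eeps d ε α φ lam t =
      ε / 2 * (∫ x in Qcell d, ‖gradient (fun y => φ y t) x‖ ^ 2) +
        (∫ x in Qcell d, W (φ x t)) / ε + ε ^ α / 2 * lam t ^ 2 := by
  have hgrad : IntegrableOn (fun x => ‖gradient (fun y => φ y t) x‖ ^ 2) (Qcell d) :=
    integrableOn_of_continuous_of_isBounded (isBounded_Qcell d)
      (((continuous_gradient_space hφ).comp (.prodMk_left t)).norm.pow 2)
  have hW : IntegrableOn (fun x => W (φ x t)) (Qcell d) :=
    integrableOn_of_continuous_of_isBounded (isBounded_Qcell d)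
      (continuous_W.comp (contDiff_time_slice hφ t).continuous)
  simp only [Eeps, mul_div_right_comm ε]
  rw [integral_add (hgrad.const_mul _) (hW.div_const _), integral_const_mul, integral_div]

theorem Eeps_nonneg (hε : 0 ≤ ε) (t : ℝ) : 0 ≤ Eeps d ε α φ lam t := by
  refine add_nonneg (integral_nonneg fun x => ?_) (by positivity)
  have := W_nonneg (φ x t)
  positivity

theorem hasDerivAt_lam (hφ : ContDiff ℝ 1 (uncurry φ))
    (hlam : ∀ t, lam t = ε ^ (-α) *
      ((∫ x in Qcell d, kfun (φ x 0)) - (∫ x in Qcell d, kfun (φ x t)))) (t : ℝ) :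
    HasDerivAt lam (-(ε ^ (-α) * ∫ x in Qcell d, √(2 * W (φ x t)) * deriv (φ x) t)) t := by
  rw [funext hlam, ← mul_neg]
  exact ((hasDerivAt_setIntegral_comp (isBounded_Qcell d) hasDerivAt_kfun
    continuous_sqrt_two_mul_W hφ t).const_sub _).const_mul _

theorem setIntegral_Qcell_mul_force {u v : Euc d → ℝ} (hu : ContDiff ℝ 2 u) (hv : Continuous v)
    (ε c : ℝ) :
    ∫ x in Qcell d, v x * (ε * lap u x - Wp (u x) / ε + c * √(2 * W (u x))) =
      ε * (∫ x in Qcell d, v x * lap u x) - (∫ x in Qcell d, Wp (u x) * v x) / ε +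
        c * ∫ x in Qcell d, √(2 * W (u x)) * v x := by
  have lap_integrable : IntegrableOn (fun x => ε * (v x * lap u x)) (Qcell d) :=
    (integrableOn_of_continuous_of_isBounded (isBounded_Qcell d)
      (hv.mul (continuous_lap hu))).const_mul ε
  have Wp_integrable : IntegrableOn (fun x => Wp (u x) * v x / ε) (Qcell d) :=
    (integrableOn_of_continuous_of_isBounded (isBounded_Qcell d)
      ((continuous_Wp.comp hu.continuous).mul hv)).div_const ε
  have sqrt_integrable : IntegrableOn (fun x => c * (√(2 * W (u x)) * v x)) (Qcell d) :=
    (integrableOn_of_continuous_of_isBounded (isBounded_Qcell d)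
      ((continuous_sqrt_two_mul_W.comp hu.continuous).mul hv)).const_mul c
  calc
    _ = ∫ x in Qcell d, (ε * (v x * lap u x) - Wp (u x) * v x / ε +
        c * (√(2 * W (u x)) * v x)) := by congr with x; ring
    _ = _ := by
      rw [integral_add (by exact lap_integrable.sub Wp_integrable) sqrt_integrable,
        integral_sub lap_integrable Wp_integrable, integral_const_mul, integral_const_mul,
        integral_div]

theorem hasDerivAt_Eeps (hε : 0 < ε) (hφ : ContDiff ℝ 2 (uncurry φ))
    (hper : ∀ t, IsCellPeriodic fun x => φ x t)
    (hlam : ∀ t, lam t = ε ^ (-α) *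
      ((∫ x in Qcell d, kfun (φ x 0)) - (∫ x in Qcell d, kfun (φ x t)))) (t : ℝ) :
    HasDerivAt (Eeps d ε α φ lam)
      (-∫ x in Qcell d, deriv (φ x) t * (ε * lap (fun y => φ y t) x - Wp (φ x t) / ε +
        lam t * √(2 * W (φ x t)))) t := by
  have hφ' : ContDiff ℝ 1 (uncurry φ) := hφ.of_le one_le_two
  have hderiv := (((hasDerivAt_setIntegral_Qcell_norm_gradient_sq hφ hper t).const_mul (ε / 2)).add
    ((hasDerivAt_setIntegral_comp (μ := volume) (isBounded_Qcell d) hasDerivAt_W continuous_Wp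
      hφ' t).div_const ε)).add (((hasDerivAt_lam hφ' hlam t).fun_pow 2).const_mul (ε ^ α / 2))
  rw [funext (Eeps_eq_gradient_add_potential_add_penalty hφ')]
  refine hderiv.congr_deriv ?_
  rw [setIntegral_Qcell_mul_force (contDiff_time_slice hφ t)
    (contDiff_time_slice (contDiff_deriv_time (m := 1) hφ le_rfl) t).continuous]
  have rpow_cancel : ε ^ α * ε ^ (-α) = 1 := by rw [← rpow_add hε, add_neg_cancel, rpow_zero]
  simp only [Nat.cast_ofNat, Nat.add_one_sub_one, pow_one]
  linear_combination
    (-lam t * ∫ x in Qcell d, √(2 * W (φ x t)) * deriv (φ x) t) * rpow_cancel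

theorem continuous_dissipation (hφ : ContDiff ℝ 1 (uncurry φ)) :
    Continuous fun t => ∫ x in Qcell d, ε * deriv (φ x) t ^ 2 :=
  continuous_setIntegral_of_isBounded (isBounded_Qcell d) <|
    ((contDiff_deriv_time (m := 0) hφ (by simp)).continuous.fun_pow 2).const_mul ε

theorem Eeps_add_integral_dissipation (hT : 0 ≤ T) (hε : 0 < ε) (hφ : ContDiff ℝ 2 (uncurry φ))
    (hper : ∀ t, IsCellPeriodic fun x => φ x t)
    (hlam : ∀ t, lam t = ε ^ (-α) *
      ((∫ x in Qcell d, kfun (φ x 0)) - (∫ x in Qcell d, kfun (φ x t))))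
    (hPDE : ∀ (x : Euc d), ∀ t ∈ Set.Ioo (0 : ℝ) T,
      ε * deriv (φ x) t =
        ε * lap (fun y => φ y t) x - Wp (φ x t) / ε + lam t * √(2 * W (φ x t))) :
    Eeps d ε α φ lam T + ∫ t in (0 : ℝ)..T, ∫ x in Qcell d, ε * deriv (φ x) t ^ 2 =
      Eeps d ε α φ lam 0 := by
  have hasDerivAt_energy := hasDerivAt_Eeps hε hφ hper hlam
  have dissipation : ∀ t ∈ Set.Ioo 0 T,
      HasDerivAt (Eeps d ε α φ lam) (-∫ x in Qcell d, ε * deriv (φ x) t ^ 2) t := by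
    intro t ht
    refine (hasDerivAt_energy t).congr_deriv ?_
    simp only [← hPDE _ t ht, pow_two, mul_left_comm ε]
  have fundamental := intervalIntegral.integral_eq_sub_of_hasDerivAt_of_le hT
    (fun t _ => (hasDerivAt_energy t).continuousAt.continuousWithinAt) dissipation
    ((continuous_dissipation (hφ.of_le one_le_two)).neg.intervalIntegrable 0 T)
  rw [intervalIntegral.integral_neg] at fundamental
  linarith

theorem norm_veps_sq_mul_le (hε : 0 ≤ ε) (x : Euc d) (t : ℝ) :
    ‖veps d φ x t‖ ^ 2 * (ε * ‖gradient (fun y => φ y t) x‖ ^ 2) ≤ ε * deriv (φ x) t ^ 2 := by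
  by_cases hgrad : gradient (fun y => φ y t) x = 0
  · rw [hgrad, norm_zero, zero_pow two_ne_zero, mul_zero, mul_zero]
    positivity
  · have hnorm : ‖gradient (fun y => φ y t) x‖ ≠ 0 := norm_ne_zero_iff.2 hgrad
    rw [veps, if_pos hgrad, norm_smul, mul_pow, norm_eq_abs, sq_abs]
    refine le_of_eq ?_
    field_simp

theorem integral_norm_veps_sq_mul_le (hT : 0 ≤ T) (hε : 0 ≤ ε) (hφ : ContDiff ℝ 1 (uncurry φ)) :
    ∫ t in (0 : ℝ)..T, ∫ x in Qcell d,
        ‖veps d φ x t‖ ^ 2 * (ε * ‖gradient (fun y => φ y t) x‖ ^ 2) ≤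
      ∫ t in (0 : ℝ)..T, ∫ x in Qcell d, ε * deriv (φ x) t ^ 2 := by
  have weighted_nonneg (x : Euc d) (t : ℝ) :
      0 ≤ ‖veps d φ x t‖ ^ 2 * (ε * ‖gradient (fun y => φ y t) x‖ ^ 2) := by positivity
  have slice_integrable (t : ℝ) : IntegrableOn (fun x => ε * deriv (φ x) t ^ 2) (Qcell d) :=
    integrableOn_of_continuous_of_isBounded (isBounded_Qcell d) <|
      ((contDiff_time_slice (contDiff_deriv_time (m := 0) hφ (by simp)) t).continuous.fun_pow
        2).const_mul ε
  rw [intervalIntegral.integral_of_le hT, intervalIntegral.integral_of_le hT]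
  refine integral_mono_of_nonneg (.of_forall fun t => integral_nonneg (weighted_nonneg · t))
    ((continuous_dissipation hφ).intervalIntegrable 0 T).1 (.of_forall fun t => ?_)
  exact integral_mono_of_nonneg (.of_forall (weighted_nonneg · t)) (slice_integrable t)
    (.of_forall (norm_veps_sq_mul_le hε · t))

theorem stmt5_general (hT : 0 ≤ T) (hε : 0 < ε) (hφ : ContDiff ℝ 2 (uncurry φ))
    (hper : ∀ (x : Euc d) (z : Fin d → ℤ) (t : ℝ),
      φ (x + (WithLp.equiv 2 (Fin d → ℝ)).symm fun i => (z i : ℝ)) t = φ x t)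
    (hlam : ∀ t, lam t = ε ^ (-α) *
      ((∫ x in Qcell d, kfun (φ x 0)) - (∫ x in Qcell d, kfun (φ x t))))
    (hPDE : ∀ (x : Euc d), ∀ t ∈ Set.Ioo (0 : ℝ) T,
      ε * deriv (φ x) t =
        ε * lap (fun y => φ y t) x - Wp (φ x t) / ε + lam t * √(2 * W (φ x t))) :
    ∫ t in (0 : ℝ)..T, ∫ x in Qcell d,
        ‖veps d φ x t‖ ^ 2 * (ε * ‖gradient (fun y => φ y t) x‖ ^ 2) ≤
      Eeps d ε α φ lam 0 := by
  have hcell : ∀ t, IsCellPeriodic fun x => φ x t := fun t =>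
    isCellPeriodic_of_forall_int fun x z => hper x z t
  calc _ ≤ ∫ t in (0 : ℝ)..T, ∫ x in Qcell d, ε * deriv (φ x) t ^ 2 :=
        integral_norm_veps_sq_mul_le hT hε.le (hφ.of_le one_le_two)
    _ ≤ Eeps d ε α φ lam T + ∫ t in (0 : ℝ)..T, ∫ x in Qcell d, ε * deriv (φ x) t ^ 2 :=
        le_add_of_nonneg_left (Eeps_nonneg hε.le T)
    _ = Eeps d ε α φ lam 0 := Eeps_add_integral_dissipation hT hε hφ hcell hlam hPDE

end Energy

/-- `L²` bound for the approximate velocity. -/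
theorem stmt5 (d : ℕ) (hd : 2 ≤ d) (T ε α : ℝ) (hT : 0 < T) (hε : 0 < ε)
    (hα : α ∈ Set.Ioo (0:ℝ) 1)
    (φ : Euc d → ℝ → ℝ)
    (hφ : ContDiff ℝ (⊤ : ℕ∞) (Function.uncurry φ))
    (hper : ∀ (x : Euc d) (z : Fin d → ℤ) (t : ℝ),
      φ (x + (WithLp.equiv 2 (Fin d → ℝ)).symm fun i => (z i : ℝ)) t = φ x t)
    (lam : ℝ → ℝ)
    (hlam : ∀ t, lam t = ε ^ (-α) *
      ((∫ x in Qcell d, kfun (φ x 0)) - (∫ x in Qcell d, kfun (φ x t))))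
    (hPDE : ∀ (x : Euc d), ∀ t ∈ Set.Ioo (0:ℝ) T,
      ε * deriv (φ x) t =
        ε * lap (fun y => φ y t) x - Wp (φ x t) / ε + lam t * Real.sqrt (2 * W (φ x t))) :
    (∫ t in (0:ℝ)..T, ∫ x in Qcell d,
        ‖veps d φ x t‖ ^ 2 * (ε * ‖gradient (fun y => φ y t) x‖ ^ 2)) ≤
      Eeps d ε α φ lam 0 := by
  exact stmt5_general hT.le hε (hφ.of_le (WithTop.coe_le_coe.2 le_top)) hper hlam hPDE
end
end
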